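/- Let μ be a probability mass function on T₁ with 0 < β := Σ_τ μ(τ)·deg(τ) < ∞, let η₁ be the law on T₁ with degree distribution Q and i.i.d. marks, where Q has finite nonzero mean, and assume μ is absolutely continuous with respect to η₁. Then the double sum Σ_{(x,m)∈T₁} μ(x,m) · Σ_{(a,y,y′)∈m} log( μ̄^{1,o}((a,y),(x,y′)) / η̄₁^{1,o}((a,y),(x,y′)) ) (inner sum taken with multiplicity) converges absolutely and equals β·H(μ̄^{1,o} ‖ η̄₁^{1,o}). -/

import Mathlib

open scoped BigOperators ENNReal Classical

noncomputable section

/-- Depth-1 rooted marked trees: the root mark together with the multiset of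
(vertex mark, edge mark toward the root, edge mark at the root) triples of the
neighbors of the root. -/
abbrev T1 (𝒳 𝒴 : Type) : Type := 𝒳 × Multiset (𝒳 × 𝒴 × 𝒴)

section Defs

variable {𝒳 𝒴 : Type} [Fintype 𝒳] [Fintype 𝒴] [DecidableEq 𝒳] [DecidableEq 𝒴]

/-- Degree of the root of a depth-1 tree. -/
def deg (τ : T1 𝒳 𝒴) : ℕ := Multiset.card τ.2

/-- Symmetrized edge-mark distribution `ξ̄(y, y') = (ξ(y, y') + ξ(y', y)) / 2`. -/
def xiBar (ξ : 𝒴 × 𝒴 → ℝ) (y y' : 𝒴) : ℝ := (ξ (y, y') + ξ (y', y)) / 2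

/-- Multinomial coefficient `card m ! / ∏ₛ (multiplicity of s in m)!`. -/
def ordCoeff (m : Multiset (𝒳 × 𝒴 × 𝒴)) : ℝ :=
  (Nat.factorial (Multiset.card m) : ℝ) /
    ∏ s ∈ m.toFinset, (Nat.factorial (m.count s) : ℝ)

/-- The law `η₁` on `T1` with root-degree distribution `Q` and i.i.d. marks:
`η₁ (x, m) = ν x · Q (card m) · (card m)!/∏ₛ count s !· ∏_{(a,y,y') ∈ m} ν a · ξ̄ y y'`. -/
def eta1 (ν : 𝒳 → ℝ) (ξ : 𝒴 × 𝒴 → ℝ) (Q : ℕ → ℝ) (τ : T1 𝒳 𝒴) : ℝ :=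
  ν τ.1 * Q (Multiset.card τ.2) * ordCoeff τ.2 *
    (τ.2.map fun p => ν p.1 * xiBar ξ p.2.1 p.2.2).prod

/-- Mean root degree `β = ∑_τ μ τ · deg τ`. -/
def meanDeg (μ : T1 𝒳 𝒴 → ℝ) : ℝ := ∑' τ : T1 𝒳 𝒴, μ τ * (deg τ : ℝ)

/-- The neighbor–root marginal `μ̄^{1,o}`:
`μ̄^{1,o} ((a,y), (b,y')) = (1/β) ∑_{m} μ (b, m) · (multiplicity of (a,y,y') in m)`. -/
def nbrRoot (μ : T1 𝒳 𝒴 → ℝ) (p : (𝒳 × 𝒴) × (𝒳 × 𝒴)) : ℝ :=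
  (1 / meanDeg μ) *
    ∑' m : Multiset (𝒳 × 𝒴 × 𝒴), μ (p.2.1, m) * (m.count (p.1.1, p.1.2, p.2.2) : ℝ)

/-- First marginal `μ̄¹` of `μ̄^{1,o}`. -/
def marg1 (μ : T1 𝒳 𝒴 → ℝ) (u : 𝒳 × 𝒴) : ℝ := ∑ v : 𝒳 × 𝒴, nbrRoot μ (u, v)

/-- Second marginal `μ̄ᵒ` of `μ̄^{1,o}`. -/
def margO (μ : T1 𝒳 𝒴 → ℝ) (v : 𝒳 × 𝒴) : ℝ := ∑ u : 𝒳 × 𝒴, nbrRoot μ (u, v)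

/-- Conditional law `μ̄^{1|o} (u | v) = μ̄^{1,o}(u,v) / μ̄ᵒ(v)` (and `0` if `μ̄ᵒ(v) = 0`). -/
def condNbr (μ : T1 𝒳 𝒴 → ℝ) (u v : 𝒳 × 𝒴) : ℝ :=
  if 0 < margO μ v then nbrRoot μ (u, v) / margO μ v else 0

/-- `μ̌ (x, m) = η₁ (x, m) · ∏_{(a,y,y') ∈ m} μ̄¹(a,y) / η̄₁¹(a,y)` (product with
multiplicity; in Lean a ratio with zero denominator is `0`). -/
def muCheck (ν : 𝒳 → ℝ) (ξ : 𝒴 × 𝒴 → ℝ) (Q : ℕ → ℝ) (μ : T1 𝒳 𝒴 → ℝ) (τ : T1 𝒳 𝒴) : ℝ :=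
  eta1 ν ξ Q τ *
    (τ.2.map fun p => marg1 μ (p.1, p.2.1) / marg1 (eta1 ν ξ Q) (p.1, p.2.1)).prod

/-- `μ̂ (x, m) = η₁ (x, m) · ∏_{(a,y,y') ∈ m} μ̄^{1|o}((a,y)|(x,y')) / η̄₁^{1|o}((a,y)|(x,y'))`
(product with multiplicity; a ratio with zero denominator is `0`). -/
def muHat (ν : 𝒳 → ℝ) (ξ : 𝒴 × 𝒴 → ℝ) (Q : ℕ → ℝ) (μ : T1 𝒳 𝒴 → ℝ) (τ : T1 𝒳 𝒴) : ℝ :=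
  eta1 ν ξ Q τ *
    (τ.2.map fun p =>
      condNbr μ (p.1, p.2.1) (τ.1, p.2.2) /
        condNbr (eta1 ν ξ Q) (p.1, p.2.1) (τ.1, p.2.2)).prod

end Defs

/-- Relative entropy `H(p ‖ q) = ∑ₛ p s * log (p s / q s)` of probability mass
functions, with value `∞` when `p` is not absolutely continuous with respect to `q`
(or the defining series diverges); `0·log 0 = 0` is automatic since `Real.log 0 = 0`. -/
def relEnt {S : Type*} (p q : S → ℝ) : ℝ≥0∞ :=
  if (∀ s, q s = 0 → p s = 0) ∧ Summable (fun s => p s * Real.log (p s / q s)) then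
    ENNReal.ofReal (∑' s, p s * Real.log (p s / q s))
  else ⊤

/-!
The total `μ`-weight of the root edges with joint marks `q` is `β · μ̄^{1,o} q`. So summing `f` over
the root edges of a `μ`-weighted tree, and regrouping the edges by their marks, gives
`β · ∑ μ̄^{1,o} q · f q`. Fubini applies as soon as the double series converges absolutely, which
finite mark sets and a finite mean degree guarantee for every `f`.
-/

section MultisetSums

variable {ι α : Type*}

theorem sum_map_abs_nonneg (m : Multiset α) (f : α → ℝ) : 0 ≤ (m.map fun a => |f a|).sum :=
  Multiset.sum_nonneg (Multiset.forall_mem_map_iff.mpr fun a _ => abs_nonneg (f a))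

theorem summable_mul_sum_map_abs [Finite α] {w : ι → ℝ} {M : ι → Multiset α}
    (h : Summable fun i => w i * (Multiset.card (M i) : ℝ)) (f : α → ℝ) :
    Summable fun i => w i * ((M i).map fun a => |f a|).sum := by
  obtain ⟨C, hC⟩ := (Set.finite_range fun a => |f a|).bddAbove
  rw [mem_upperBounds, Set.forall_mem_range] at hC
  refine Summable.of_norm_bounded (h.norm.mul_right C) fun i => ?_
  have sum_le : ((M i).map fun a => |f a|).sum ≤ Multiset.card (M i) * C := by
    simpa only [Multiset.card_map, nsmul_eq_mul] using
      Multiset.sum_le_card_nsmul ((M i).map fun a => |f a|) C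
        (Multiset.forall_mem_map_iff.mpr fun a _ => hC a)
  rw [norm_mul, norm_mul, Real.norm_of_nonneg (sum_map_abs_nonneg _ _),
    RCLike.norm_natCast, mul_assoc]
  exact mul_le_mul_of_nonneg_left sum_le (norm_nonneg _)

variable [DecidableEq α]

theorem hasSum_count_mul {R : Type*} [NonAssocSemiring R] [TopologicalSpace R]
    (m : Multiset α) (f : α → R) : HasSum (fun a => (m.count a : R) * f a) (m.map f).sum := by
  simp only [Finset.sum_multiset_map_count, nsmul_eq_mul]
  refine hasSum_sum_of_ne_finset_zero fun a ha => ?_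
  rw [Multiset.count_eq_zero_of_notMem (mt Multiset.mem_toFinset.mpr ha), Nat.cast_zero, zero_mul]

variable {w : ι → ℝ} {M : ι → Multiset α} {f : α → ℝ}

theorem summable_prod_mul_count_mul
    (h : Summable fun i => w i * ((M i).map fun a => |f a|).sum) :
    Summable fun p : ι × α => w p.1 * (((M p.1).count p.2 : ℝ) * f p.2) := by
  have abs_fiber (i : ι) : HasSum (fun a => |w i * (((M i).count a : ℝ) * f a)|)
      (|w i| * ((M i).map fun a => |f a|).sum) := by
    simpa only [abs_mul, Nat.abs_cast] using
      (hasSum_count_mul (M i) fun a => |f a|).mul_left |w i|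
  refine Summable.of_abs ((summable_prod_of_nonneg fun _ => abs_nonneg _).mpr
    ⟨fun i => (abs_fiber i).summable, ?_⟩)
  refine h.abs.congr fun i => ?_
  rw [(abs_fiber i).tsum_eq, abs_mul, abs_of_nonneg (sum_map_abs_nonneg _ _)]

theorem summable_tsum_mul_count_mul
    (h : Summable fun i => w i * ((M i).map fun a => |f a|).sum) :
    Summable fun a => (∑' i, w i * ((M i).count a : ℝ)) * f a := by
  simpa only [Prod.fst_swap, Prod.snd_swap, ← mul_assoc, tsum_mul_right] using
    (summable_prod_mul_count_mul h).prod_symm.prod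

theorem hasSum_mul_sum_map
    (h : Summable fun i => w i * ((M i).map fun a => |f a|).sum) :
    HasSum (fun i => w i * ((M i).map f).sum)
      (∑' a, (∑' i, w i * ((M i).count a : ℝ)) * f a) := by
  have double := summable_prod_mul_count_mul h
  have regroup : ∑' p : ι × α, w p.1 * (((M p.1).count p.2 : ℝ) * f p.2) =
      ∑' a, (∑' i, w i * ((M i).count a : ℝ)) * f a := by
    rw [← (Equiv.prodComm α ι).tsum_eq]
    simpa only [Equiv.prodComm_apply, Prod.fst_swap, Prod.snd_swap, ← mul_assoc,
      tsum_mul_right] using double.prod_symm.tsum_prod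
  rw [← regroup]
  exact double.hasSum.prod_fiberwise fun i => (hasSum_count_mul (M i) f).mul_left (w i)

end MultisetSums

section RootEdges

variable {𝒳 𝒴 : Type}

/-- The joint marks `((a, y), (x, y'))` of the edges at the root `x`: one entry for each neighbor
`(a, y, y')`, with the neighbor side first, as in the argument of `nbrRoot`. -/
def rootEdges (τ : T1 𝒳 𝒴) : Multiset ((𝒳 × 𝒴) × (𝒳 × 𝒴)) :=
  τ.2.map fun p => ((p.1, p.2.1), (τ.1, p.2.2))

theorem card_rootEdges (τ : T1 𝒳 𝒴) : Multiset.card (rootEdges τ) = deg τ :=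
  Multiset.card_map _ _

theorem map_rootEdges {R : Type*} (f : (𝒳 × 𝒴) × (𝒳 × 𝒴) → R) (τ : T1 𝒳 𝒴) :
    (rootEdges τ).map f = τ.2.map fun p => f ((p.1, p.2.1), (τ.1, p.2.2)) :=
  Multiset.map_map _ _ _

variable [DecidableEq 𝒳] [DecidableEq 𝒴]

theorem count_rootEdges_of_root_eq (m : Multiset (𝒳 × 𝒴 × 𝒴)) (q : (𝒳 × 𝒴) × (𝒳 × 𝒴)) :
    (rootEdges (q.2.1, m)).count q = m.count (q.1.1, q.1.2, q.2.2) := by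
  have edgeMarks_injective : Function.Injective
      fun p : 𝒳 × 𝒴 × 𝒴 => ((p.1, p.2.1), (q.2.1, p.2.2)) := by
    rintro ⟨a, y, y'⟩ ⟨b, z, z'⟩ h
    simp_all only [Prod.mk.injEq, true_and]
  exact Multiset.count_map_eq_count' _ m edgeMarks_injective (q.1.1, q.1.2, q.2.2)

theorem count_rootEdges_of_root_ne {τ : T1 𝒳 𝒴} {q : (𝒳 × 𝒴) × (𝒳 × 𝒴)} (h : τ.1 ≠ q.2.1) :
    (rootEdges τ).count q = 0 := by
  refine Multiset.count_eq_zero_of_notMem fun hq => h ?_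
  obtain ⟨p, -, rfl⟩ := Multiset.mem_map.mp hq
  rfl

theorem tsum_mul_count_rootEdges (μ : T1 𝒳 𝒴 → ℝ) (q : (𝒳 × 𝒴) × (𝒳 × 𝒴)) :
    ∑' τ, μ τ * ((rootEdges τ).count q : ℝ) =
      ∑' m, μ (q.2.1, m) * (m.count (q.1.1, q.1.2, q.2.2) : ℝ) := by
  have support_subset : (Function.support fun τ => μ τ * ((rootEdges τ).count q : ℝ)) ⊆
      Set.range (Prod.mk q.2.1) := by
    intro τ hτ
    have root_eq : τ.1 = q.2.1 := by
      by_contra root_ne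
      exact hτ (by simp only [count_rootEdges_of_root_ne root_ne, Nat.cast_zero, mul_zero])
    exact ⟨τ.2, by rw [← root_eq]⟩
  rw [← (Prod.mk_right_injective q.2.1).tsum_eq support_subset]
  simp only [count_rootEdges_of_root_eq]

theorem meanDeg_mul_nbrRoot {μ : T1 𝒳 𝒴 → ℝ} (hβ : meanDeg μ ≠ 0)
    (q : (𝒳 × 𝒴) × (𝒳 × 𝒴)) :
    meanDeg μ * nbrRoot μ q = ∑' τ, μ τ * ((rootEdges τ).count q : ℝ) := by
  rw [nbrRoot, tsum_mul_count_rootEdges, ← mul_assoc, mul_one_div_cancel hβ, one_mul]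

theorem sizeBiased_representation_relEnt_general {μ : T1 𝒳 𝒴 → ℝ} (hβ : meanDeg μ ≠ 0)
    {f : (𝒳 × 𝒴) × (𝒳 × 𝒴) → ℝ}
    (hf : Summable fun τ => μ τ * ((rootEdges τ).map fun q => |f q|).sum) :
    (Summable fun q => nbrRoot μ q * f q) ∧
      HasSum (fun τ => μ τ * ((rootEdges τ).map f).sum)
        (meanDeg μ * ∑' q, nbrRoot μ q * f q) := by
  have edge_weight (q : (𝒳 × 𝒴) × (𝒳 × 𝒴)) :
      (∑' τ, μ τ * ((rootEdges τ).count q : ℝ)) * f q = meanDeg μ * (nbrRoot μ q * f q) := by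
    rw [← meanDeg_mul_nbrRoot hβ, mul_assoc]
  constructor
  · rw [← summable_mul_left_iff hβ]
    exact (summable_tsum_mul_count_mul hf).congr edge_weight
  · rw [← tsum_mul_left, ← tsum_congr edge_weight]
    exact hasSum_mul_sum_map hf

end RootEdges

/-- **Size-biased representation of `β·H(μ̄^{1,o} ‖ η̄₁^{1,o})` (Lemma 5.3).**
If `μ` is a pmf on `T1` with mean degree `β ∈ (0, ∞)`, `η₁` is the law with degree
distribution `Q` and i.i.d. marks, and `μ ≪ η₁`, then the double series
`∑_{(x,m)} μ (x,m) · ∑_{(a,y,y') ∈ m} log (μ̄^{1,o}((a,y),(x,y')) / η̄₁^{1,o}((a,y),(x,y')))`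
converges absolutely and equals `β · H(μ̄^{1,o} ‖ η̄₁^{1,o})`
`= β · ∑_p μ̄^{1,o} p · log (μ̄^{1,o} p / η̄₁^{1,o} p)`. -/
theorem sizeBiased_representation_relEnt
    {𝒳 𝒴 : Type} [Fintype 𝒳] [Fintype 𝒴] [DecidableEq 𝒳] [DecidableEq 𝒴]
    (ν : 𝒳 → ℝ) (hν0 : ∀ x, 0 ≤ ν x) (hν1 : ∑ x, ν x = 1)
    (ξ : 𝒴 × 𝒴 → ℝ) (hξ0 : ∀ p, 0 ≤ ξ p) (hξ1 : ∑ p : 𝒴 × 𝒴, ξ p = 1)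
    (Q : ℕ → ℝ) (hQ0 : ∀ k, 0 ≤ Q k) (hQ1 : HasSum Q 1)
    (hQm : Summable fun k : ℕ => (k : ℝ) * Q k)
    (hQpos : 0 < ∑' k : ℕ, (k : ℝ) * Q k)
    (μ : T1 𝒳 𝒴 → ℝ) (hμ0 : ∀ τ, 0 ≤ μ τ) (hμ1 : HasSum μ 1)
    (hβfin : Summable fun τ : T1 𝒳 𝒴 => μ τ * (deg τ : ℝ))
    (hβpos : 0 < meanDeg μ)
    (habs : ∀ τ, eta1 ν ξ Q τ = 0 → μ τ = 0) :
    (Summable fun τ : T1 𝒳 𝒴 =>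
        |μ τ * (τ.2.map fun p =>
            Real.log (nbrRoot μ ((p.1, p.2.1), (τ.1, p.2.2)) /
              nbrRoot (eta1 ν ξ Q) ((p.1, p.2.1), (τ.1, p.2.2)))).sum|) ∧
      (∑' τ : T1 𝒳 𝒴,
          μ τ * (τ.2.map fun p =>
            Real.log (nbrRoot μ ((p.1, p.2.1), (τ.1, p.2.2)) /
              nbrRoot (eta1 ν ξ Q) ((p.1, p.2.1), (τ.1, p.2.2)))).sum) =
        meanDeg μ *
          ∑ p : (𝒳 × 𝒴) × (𝒳 × 𝒴),
            nbrRoot μ p * Real.log (nbrRoot μ p / nbrRoot (eta1 ν ξ Q) p) := by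
  have absolute := summable_mul_sum_map_abs (w := μ) (M := rootEdges)
    (by simpa only [card_rootEdges] using hβfin)
    fun q => Real.log (nbrRoot μ q / nbrRoot (eta1 ν ξ Q) q)
  have sizeBiased := (sizeBiased_representation_relEnt_general hβpos.ne' absolute).2
  simp only [map_rootEdges, tsum_fintype] at sizeBiased
  exact ⟨sizeBiased.summable.abs, sizeBiased.tsum_eq⟩
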